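/- Let mu, mu' : Q_p^* -> C^* be unramified group homomorphisms and set alpha = mu(p)^{-1} * sqrt(p) and beta = mu'(p)^{-1} / sqrt(p). Let v : G -> C be a function such that v(b*g) = mu(a) * mu'(d) * |a/d|^{1/2} * v(g) for every b = [[a,b0],[0,d]] in B and every g in G, such that v(g*k) = v(g) for every k in K and g in G, and such that v(1) = 1. Then for every integer r >= 1 and every k in K: (a) if k lies in I_s \ I_{s+1} with 0 <= s <= r-1 then v(k*gamma^r) - alpha * v(k*gamma^{r-1}) = alpha^s * beta^{r-s} - alpha^{s+1} * beta^{r-1-s}, and if k lies in I_r then v(k*gamma^r) - alpha * v(k*gamma^{r-1}) = 0; (b) if k lies in I_r then v(k*gamma^r) - beta * v(k*gamma^{r-1}) = alpha^r * (1 - beta/alpha), and if k lies in K \ I_r then v(k*gamma^r) - beta * v(k*gamma^{r-1}) = 0. -/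

import Mathlib

open Matrix

noncomputable section

variable (p : ℕ) [Fact p.Prime]

/-- The underlying matrix of an element of `GL₂(ℚ_p)`. -/
def mat (g : GL (Fin 2) ℚ_[p]) : Matrix (Fin 2) (Fin 2) ℚ_[p] := g

/-- Membership in `K = GL₂(ℤ_p)`: all entries are `p`-adic integers and the
determinant is a unit of `ℤ_p`. -/
def inK (g : GL (Fin 2) ℚ_[p]) : Prop :=
  (∀ i j, ‖mat p g i j‖ ≤ 1) ∧ ‖(mat p g).det‖ = 1

/-- Membership in the Iwahori subgroup `I_n` of `K`: for `n = 0`, `I_0 = K`;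
for `n ≥ 1`, the diagonal entries are units of `ℤ_p` and the lower left entry
lies in `p^n ℤ_p`. -/
def inI (n : ℕ) (g : GL (Fin 2) ℚ_[p]) : Prop :=
  inK p g ∧ (n = 0 ∨
    (‖mat p g 0 0‖ = 1 ∧ ‖mat p g 1 1‖ = 1 ∧ ‖mat p g 1 0‖ ≤ (p : ℝ) ^ (-(n : ℤ))))

/-- `p` as a unit of `ℚ_p`. -/
def pu : ℚ_[p]ˣ :=
  Units.mk0 (p : ℚ_[p]) (by exact_mod_cast (Fact.out : p.Prime).ne_zero)

/-- The element `γ = diag(p⁻¹, 1)` of `GL₂(ℚ_p)`. -/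
def gamma : GL (Fin 2) ℚ_[p] :=
  Matrix.GeneralLinearGroup.mkOfDetNeZero !![(p : ℚ_[p])⁻¹, 0; 0, 1] (by
    have hp : (p : ℚ_[p]) ≠ 0 := by exact_mod_cast (Fact.out : p.Prime).ne_zero
    simp [Matrix.det_fin_two_of, hp])

/-- A character of `ℚ_p^×` is unramified if it is trivial on `ℤ_p^×`. -/
def Unramified (μ : ℚ_[p]ˣ →* ℂˣ) : Prop :=
  ∀ u : ℚ_[p]ˣ, ‖(u : ℚ_[p])‖ = 1 → μ u = 1

/-!
By the Iwasawa decomposition, a function as in the theorem is determined at `g` by two numbers: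
if the bottom row of `g` has maximum norm `p ^ t` and `|det g| = p ^ (s + t)`, then
`v g = α ^ s * β ^ t`. For `k ∈ K` with bottom row `(c, d)`, the determinant of `k γ ^ n` has norm
`p ^ n` and its bottom row `(c p⁻ⁿ, d)` has norm `1` if `k ∈ I_n`, and `p ^ (n - s)` if
`|c| = p⁻ˢ` with `s ≤ n`. Hence `v (k γ ^ n)` is `α ^ n` in the first case and `α ^ s β ^ (n - s)`
in the second, and the formulas are differences of such values at `n = r` and `n = r - 1`.
-/

lemma sqrt_zpow {x : ℝ} (hx : 0 ≤ x) (n : ℤ) : √(x ^ n) = √x ^ n := by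
  rw [Real.sqrt_eq_iff_mul_self_eq (by positivity) (by positivity), ← mul_zpow,
    Real.mul_self_sqrt hx]

section RowNorm

variable {F : Type*} [NormedField F]

/-- The maximum norm of the bottom row of a `2 × 2` matrix; over a nonarchimedean field it is
invariant under right multiplication by integral matrices with unit determinant, so it reads off
the norm of the lower right entry of the triangular factor in an Iwasawa decomposition. -/
def bottomRowNorm (M : Matrix (Fin 2) (Fin 2) F) : ℝ := max ‖M 1 0‖ ‖M 1 1‖

/-- The integral points of `GL₂`: the entries lie in the closed unit ball and the determinant has
norm `1`. Over `ℚ_p` this is the condition `inK`. -/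
def IsIntegralGL (M : Matrix (Fin 2) (Fin 2) F) : Prop :=
  (∀ i j, ‖M i j‖ ≤ 1) ∧ ‖M.det‖ = 1

-- The Iwasawa decomposition `G = BK`, with `k⁻¹` the factor in `K`.
lemma exists_isIntegralGL_mul_bottomRow (M : Matrix (Fin 2) (Fin 2) F) :
    ∃ k : GL (Fin 2) F, IsIntegralGL (k : Matrix (Fin 2) (Fin 2) F) ∧
      (M * k) 1 0 = 0 ∧ ‖(M * k) 1 1‖ = bottomRowNorm M := by
  rcases le_or_gt ‖M 1 0‖ ‖M 1 1‖ with hcd | hdc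
  · refine ⟨GeneralLinearGroup.mkOfDetNeZero !![1, 0; -(M 1 0 / M 1 1), 1] (by simp),
      ⟨?_, ?_⟩, ?_, ?_⟩
    · have hquot : ‖M 1 0‖ / ‖M 1 1‖ ≤ 1 := div_le_one_of_le₀ hcd (norm_nonneg _)
      simpa [Fin.forall_fin_two, GeneralLinearGroup.mkOfDetNeZero] using hquot
    · simp [GeneralLinearGroup.mkOfDetNeZero]
    · have hc : M 1 1 = 0 → M 1 0 = 0 := fun hd ↦ by simpa [hd] using hcd
      simp [GeneralLinearGroup.mkOfDetNeZero, Matrix.mul_apply, mul_div_cancel_of_imp' hc]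
    · simp [GeneralLinearGroup.mkOfDetNeZero, Matrix.mul_apply, bottomRowNorm, hcd]
  · have hc : M 1 0 ≠ 0 := norm_pos_iff.1 ((norm_nonneg _).trans_lt hdc)
    refine ⟨GeneralLinearGroup.mkOfDetNeZero !![-(M 1 1 / M 1 0), 1; 1, 0] (by simp),
      ⟨?_, ?_⟩, ?_, ?_⟩
    · have hquot : ‖M 1 1‖ / ‖M 1 0‖ ≤ 1 := div_le_one_of_le₀ hdc.le (norm_nonneg _)
      simpa [Fin.forall_fin_two, GeneralLinearGroup.mkOfDetNeZero] using hquot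
    · simp [GeneralLinearGroup.mkOfDetNeZero]
    · simp [GeneralLinearGroup.mkOfDetNeZero, Matrix.mul_apply, mul_div_cancel₀ _ hc]
    · simp [GeneralLinearGroup.mkOfDetNeZero, Matrix.mul_apply, bottomRowNorm, hdc.le]

namespace IsIntegralGL

variable [IsUltrametricDist F] {M : Matrix (Fin 2) (Fin 2) F}

lemma norm_diag_eq_one (hM : IsIntegralGL M) (hc : ‖M 1 0‖ < 1) :
    ‖M 0 0‖ = 1 ∧ ‖M 1 1‖ = 1 := by
  obtain ⟨hint, hdet⟩ := hM
  have hbc : ‖M 0 1 * M 1 0‖ < 1 := by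
    rw [norm_mul]
    exact mul_lt_one_of_nonneg_of_lt_one_right (hint 0 1) (norm_nonneg _) hc
  have had : ‖M 0 0‖ * ‖M 1 1‖ = 1 := by
    have hsum : M 0 0 * M 1 1 = M.det + M 0 1 * M 1 0 := by rw [Matrix.det_fin_two]; ring
    rw [← norm_mul, hsum, IsUltrametricDist.norm_add_eq_max_of_norm_ne_norm
      (by rw [hdet]; exact hbc.ne'), hdet, max_eq_left hbc.le]
  constructor
  · exact (hint 0 0).antisymm (had ▸ mul_le_of_le_one_right (norm_nonneg _) (hint 1 1))
  · exact (hint 1 1).antisymm (had ▸ mul_le_of_le_one_left (norm_nonneg _) (hint 0 0))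

lemma bottomRowNorm_eq_one (hM : IsIntegralGL M) : bottomRowNorm M = 1 := by
  rcases (hM.1 1 0).lt_or_eq with hc | hc
  · rw [bottomRowNorm, (hM.norm_diag_eq_one hc).2, max_eq_right hc.le]
  · rw [bottomRowNorm, hc, max_eq_left (hM.1 1 1)]

end IsIntegralGL

end RowNorm

section Filtration

variable {p}

lemma inI_iff {n : ℕ} {k : GL (Fin 2) ℚ_[p]} :
    inI p n k ↔ inK p k ∧ ‖mat p k 1 0‖ ≤ (p : ℝ) ^ (-(n : ℤ)) := by
  refine and_congr_right fun hK ↦ ?_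
  rcases n.eq_zero_or_pos with rfl | hn
  · simpa using hK.1 1 0
  · refine ⟨fun h ↦ (h.resolve_left hn.ne').2.2, fun hc ↦ .inr ?_⟩
    have hp : (1 : ℝ) < p := mod_cast (Fact.out : p.Prime).one_lt
    have hc_lt : ‖mat p k 1 0‖ < 1 := hc.trans_lt (zpow_lt_one_of_neg₀ hp (by lia))
    obtain ⟨ha, hd⟩ := IsIntegralGL.norm_diag_eq_one hK hc_lt
    exact ⟨ha, hd, hc⟩

lemma inI_of_succ {n : ℕ} {k : GL (Fin 2) ℚ_[p]} (hk : inI p (n + 1) k) : inI p n k := by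
  rw [inI_iff] at hk ⊢
  have hp : (1 : ℝ) ≤ p := mod_cast (Fact.out : p.Prime).one_le
  exact ⟨hk.1, hk.2.trans (zpow_le_zpow_right₀ hp (by lia))⟩

lemma exists_inI_not_inI_succ {r : ℕ} {k : GL (Fin 2) ℚ_[p]} (hK : inK p k) (hr : ¬ inI p r k) :
    ∃ s < r, inI p s k ∧ ¬ inI p (s + 1) k := by
  induction r with
  | zero => exact absurd ⟨hK, .inl rfl⟩ hr
  | succ r ih =>
    by_cases hr' : inI p r k
    · exact ⟨r, r.lt_succ_self, hr', hr⟩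
    · obtain ⟨s, hs, hk⟩ := ih hr'
      exact ⟨s, hs.trans r.lt_succ_self, hk⟩

lemma norm_lower_left_eq_of_not_inI_succ {s : ℕ} {k : GL (Fin 2) ℚ_[p]} (hk : inI p s k)
    (hk' : ¬ inI p (s + 1) k) : ‖mat p k 1 0‖ = (p : ℝ) ^ (-(s : ℤ)) := by
  rw [inI_iff] at hk hk'
  refine hk.2.antisymm (le_of_not_gt fun hlt ↦ hk' ⟨hk.1, ?_⟩)
  rw [Padic.norm_le_pow_iff_norm_lt_pow_add_one]
  simpa using hlt

lemma mat_mul (g h : GL (Fin 2) ℚ_[p]) : mat p (g * h) = mat p g * mat p h := rfl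

variable (p) in
lemma mat_gamma_pow (n : ℕ) : mat p (gamma p ^ n) = !![((p : ℚ_[p]) ^ n)⁻¹, 0; 0, 1] := by
  induction n with
  | zero => simp [mat, Matrix.one_fin_two]
  | succ n ih =>
    have hgamma : mat p (gamma p) = !![(p : ℚ_[p])⁻¹, 0; 0, 1] := rfl
    simp [pow_succ, mat_mul, ih, hgamma, mul_comm]

lemma mat_mul_gamma_pow (k : GL (Fin 2) ℚ_[p]) (n : ℕ) :
    mat p (k * gamma p ^ n) = mat p k * !![((p : ℚ_[p]) ^ n)⁻¹, 0; 0, 1] := by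
  rw [mat_mul, mat_gamma_pow]

lemma norm_det_mul_gamma_pow (k : GL (Fin 2) ℚ_[p]) (n : ℕ) :
    ‖(mat p (k * gamma p ^ n)).det‖ = ‖(mat p k).det‖ * (p : ℝ) ^ n := by
  simp [mat_mul_gamma_pow]

lemma bottomRowNorm_mul_gamma_pow (k : GL (Fin 2) ℚ_[p]) (n : ℕ) :
    bottomRowNorm (mat p (k * gamma p ^ n)) =
      max (‖mat p k 1 0‖ * (p : ℝ) ^ n) ‖mat p k 1 1‖ := by
  simp [mat_mul_gamma_pow, bottomRowNorm, Matrix.mul_apply]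

lemma bottomRowNorm_mul_gamma_pow_of_inI {n : ℕ} {k : GL (Fin 2) ℚ_[p]} (hk : inI p n k) :
    bottomRowNorm (mat p (k * gamma p ^ n)) = 1 := by
  obtain ⟨hK, hc⟩ := inI_iff.1 hk
  have hp : (0 : ℝ) < (p : ℝ) ^ n := pow_pos (mod_cast (Fact.out : p.Prime).pos) n
  rw [bottomRowNorm_mul_gamma_pow]
  refine le_antisymm (max_le ?_ (hK.1 1 1)) ?_
  · simpa [← le_div_iff₀ hp] using hc
  · have hle : ‖mat p k 1 0‖ ≤ ‖mat p k 1 0‖ * (p : ℝ) ^ n :=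
      le_mul_of_one_le_right (norm_nonneg _)
        (one_le_pow₀ (mod_cast (Fact.out : p.Prime).one_le))
    calc 1 = max ‖mat p k 1 0‖ ‖mat p k 1 1‖ := (IsIntegralGL.bottomRowNorm_eq_one hK).symm
      _ ≤ max (‖mat p k 1 0‖ * (p : ℝ) ^ n) ‖mat p k 1 1‖ := max_le_max_right _ hle

lemma bottomRowNorm_mul_gamma_pow_of_not_inI_succ {s n : ℕ} {k : GL (Fin 2) ℚ_[p]}
    (hk : inI p s k) (hk' : ¬ inI p (s + 1) k) (hsn : s ≤ n) :
    bottomRowNorm (mat p (k * gamma p ^ n)) = (p : ℝ) ^ (n - s) := by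
  have hp : (p : ℝ) ≠ 0 := mod_cast (Fact.out : p.Prime).ne_zero
  have hp' : (1 : ℝ) ≤ p := mod_cast (Fact.out : p.Prime).one_le
  have hc : ‖mat p k 1 0‖ * (p : ℝ) ^ n = (p : ℝ) ^ (n - s) := by
    rw [norm_lower_left_eq_of_not_inI_succ hk hk', _root_.zpow_neg, zpow_natCast,
      pow_sub₀ _ hp hsn, mul_comm]
  rw [bottomRowNorm_mul_gamma_pow, hc, max_eq_left]
  exact (hk.1.1 1 1).trans (one_le_pow₀ hp')

end Filtration

section NewVector

/-- The parameter `α = μ(p)⁻¹ √p`: the value of `μ(a) μ'(d) |a / d|^{1/2}` gains a factor `α` each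
time `|a|` is multiplied by `p`. -/
def alpha (μ : ℚ_[p]ˣ →* ℂˣ) : ℂ := ((μ (pu p) : ℂ))⁻¹ * (Real.sqrt p : ℂ)

/-- The parameter `β = μ'(p)⁻¹ / √p`: the value of `μ(a) μ'(d) |a / d|^{1/2}` gains a factor `β`
each time `|d|` is multiplied by `p`. -/
def beta (μ' : ℚ_[p]ˣ →* ℂˣ) : ℂ := ((μ' (pu p) : ℂ))⁻¹ / (Real.sqrt p : ℂ)

lemma alpha_ne_zero (μ : ℚ_[p]ˣ →* ℂˣ) : alpha p μ ≠ 0 := by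
  have hp : p ≠ 0 := (Fact.out : p.Prime).ne_zero
  simp [alpha, hp]

/-- The normalized new vector of the unramified principal series `Ind_B^G (μ ⊗ μ')`: the function
in it that is right invariant under `K` and takes the value `1` at `1`. -/
structure IsNormalizedNewVector (μ μ' : ℚ_[p]ˣ →* ℂˣ) (v : GL (Fin 2) ℚ_[p] → ℂ) : Prop where
  map_borel_mul (b g : GL (Fin 2) ℚ_[p]) (a d : ℚ_[p]ˣ) :
    mat p b 1 0 = 0 → mat p b 0 0 = a → mat p b 1 1 = d →
      v (b * g) = (μ a : ℂ) * (μ' d : ℂ) * (Real.sqrt ‖(a : ℚ_[p]) / (d : ℚ_[p])‖ : ℂ) * v g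
  map_mul_of_inK (g k : GL (Fin 2) ℚ_[p]) : inK p k → v (g * k) = v g
  map_one : v 1 = 1

variable {p} {μ μ' : ℚ_[p]ˣ →* ℂˣ}

lemma Unramified.apply_eq_zpow_of_norm_eq (hμ : Unramified p μ) {x : ℚ_[p]ˣ} {n : ℤ}
    (hx : ‖(x : ℚ_[p])‖ = (p : ℝ) ^ n) : μ x = (μ (pu p))⁻¹ ^ n := by
  have hp : (p : ℝ) ≠ 0 := mod_cast (Fact.out : p.Prime).ne_zero
  have hunit : μ (x * pu p ^ n) = 1 := hμ _ (by simp [pu, hx, zpow_ne_zero n hp])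
  rw [map_mul, map_zpow] at hunit
  rw [_root_.inv_zpow, eq_inv_of_mul_eq_one_left hunit]

lemma borel_character_eq (hμ : Unramified p μ) (hμ' : Unramified p μ') {a d : ℚ_[p]ˣ} {s t : ℤ}
    (ha : ‖(a : ℚ_[p])‖ = (p : ℝ) ^ s) (hd : ‖(d : ℚ_[p])‖ = (p : ℝ) ^ t) :
    (μ a : ℂ) * (μ' d : ℂ) * (Real.sqrt ‖(a : ℚ_[p]) / (d : ℚ_[p])‖ : ℂ) =
      alpha p μ ^ s * beta p μ' ^ t := by
  rw [hμ.apply_eq_zpow_of_norm_eq ha, hμ'.apply_eq_zpow_of_norm_eq hd, norm_div, ha, hd,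
    Real.sqrt_div (by positivity), sqrt_zpow p.cast_nonneg, sqrt_zpow p.cast_nonneg, alpha, beta,
    mul_zpow, div_zpow]
  push_cast
  ring

namespace IsNormalizedNewVector

variable {v : GL (Fin 2) ℚ_[p] → ℂ}

lemma apply_of_lower_left_eq_zero (hv : IsNormalizedNewVector p μ μ' v) (hμ : Unramified p μ)
    (hμ' : Unramified p μ') {b : GL (Fin 2) ℚ_[p]} {s t : ℤ} (hb : mat p b 1 0 = 0)
    (ha : ‖mat p b 0 0‖ = (p : ℝ) ^ s) (hd : ‖mat p b 1 1‖ = (p : ℝ) ^ t) :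
    v b = alpha p μ ^ s * beta p μ' ^ t := by
  have hp (n : ℤ) : (p : ℝ) ^ n ≠ 0 := zpow_ne_zero n (mod_cast (Fact.out : p.Prime).ne_zero)
  have ha₀ : mat p b 0 0 ≠ 0 := norm_ne_zero_iff.1 (ha ▸ hp s)
  have hd₀ : mat p b 1 1 ≠ 0 := norm_ne_zero_iff.1 (hd ▸ hp t)
  calc v b = v (b * 1) := by rw [mul_one]
    _ = _ := hv.map_borel_mul b 1 (Units.mk0 _ ha₀) (Units.mk0 _ hd₀) hb rfl rfl
    _ = alpha p μ ^ s * beta p μ' ^ t := by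
      rw [borel_character_eq hμ hμ' ha hd, hv.map_one, mul_one]

lemma apply_eq (hv : IsNormalizedNewVector p μ μ' v) (hμ : Unramified p μ)
    (hμ' : Unramified p μ') {g : GL (Fin 2) ℚ_[p]} {s t : ℤ}
    (hrow : bottomRowNorm (mat p g) = (p : ℝ) ^ t)
    (hdet : ‖(mat p g).det‖ = (p : ℝ) ^ (s + t)) :
    v g = alpha p μ ^ s * beta p μ' ^ t := by
  have hp : (p : ℝ) ≠ 0 := mod_cast (Fact.out : p.Prime).ne_zero
  obtain ⟨k, hK, hc, hd⟩ := exists_isIntegralGL_mul_bottomRow (mat p g)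
  have hmat : mat p (g * k) = mat p g * k := mat_mul g k
  rw [← hmat] at hc hd
  have ha : ‖mat p (g * k) 0 0‖ = (p : ℝ) ^ s := by
    have hdiag : ‖mat p (g * k) 0 0‖ * (p : ℝ) ^ t = (p : ℝ) ^ s * (p : ℝ) ^ t :=
      calc ‖mat p (g * k) 0 0‖ * (p : ℝ) ^ t = ‖(mat p (g * k)).det‖ := by
            rw [Matrix.det_fin_two, hc, mul_zero, sub_zero, norm_mul, hd, hrow]
        _ = (p : ℝ) ^ s * (p : ℝ) ^ t := by
            rw [hmat, Matrix.det_mul, norm_mul, hdet, hK.2, mul_one, zpow_add₀ hp]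
    exact mul_right_cancel₀ (zpow_ne_zero t hp) hdiag
  rw [← hv.map_mul_of_inK g k hK]
  exact hv.apply_of_lower_left_eq_zero hμ hμ' hc ha (hd.trans hrow)

lemma apply_mul_gamma_pow_of_inI (hv : IsNormalizedNewVector p μ μ' v) (hμ : Unramified p μ)
    (hμ' : Unramified p μ') {n : ℕ} {k : GL (Fin 2) ℚ_[p]} (hk : inI p n k) :
    v (k * gamma p ^ n) = alpha p μ ^ n := by
  have hvalue := hv.apply_eq hμ hμ' (s := n) (t := 0)
    (by simpa using bottomRowNorm_mul_gamma_pow_of_inI hk)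
    (by simp [norm_det_mul_gamma_pow, hk.1.2])
  simpa using hvalue

lemma apply_mul_gamma_pow_of_not_inI_succ (hv : IsNormalizedNewVector p μ μ' v)
    (hμ : Unramified p μ) (hμ' : Unramified p μ') {s n : ℕ} {k : GL (Fin 2) ℚ_[p]}
    (hk : inI p s k) (hk' : ¬ inI p (s + 1) k) (hsn : s ≤ n) :
    v (k * gamma p ^ n) = alpha p μ ^ s * beta p μ' ^ (n - s) := by
  have hvalue := hv.apply_eq hμ hμ' (s := s) (t := (n - s : ℕ))
    (mod_cast bottomRowNorm_mul_gamma_pow_of_not_inI_succ hk hk' hsn)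
    (by rw [norm_det_mul_gamma_pow, hk.1.2, one_mul, ← Nat.cast_add, Nat.add_sub_cancel' hsn,
      zpow_natCast])
  exact mod_cast hvalue

end IsNormalizedNewVector

end NewVector

/-- Lemma «calcul-NR», second part: difference formulas for
`γ^r · v - α γ^{r-1} · v` and `γ^r · v - β γ^{r-1} · v`, where `v` is the
normalized new vector of the unramified principal series `Ind_B^G (μ ⊗ μ')`. -/
theorem stmt1 (μ μ' : ℚ_[p]ˣ →* ℂˣ)
    (hμ : Unramified p μ) (hμ' : Unramified p μ')
    (α β : ℂ)
    (hα : α = ((μ (pu p) : ℂ))⁻¹ * (Real.sqrt p : ℂ))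
    (hβ : β = ((μ' (pu p) : ℂ))⁻¹ / (Real.sqrt p : ℂ))
    (v : GL (Fin 2) ℚ_[p] → ℂ)
    (hvB : ∀ (b g : GL (Fin 2) ℚ_[p]) (a d : ℚ_[p]ˣ),
      mat p b 1 0 = 0 → mat p b 0 0 = a → mat p b 1 1 = d →
      v (b * g) = (μ a : ℂ) * (μ' d : ℂ) *
        (Real.sqrt ‖(a : ℚ_[p]) / (d : ℚ_[p])‖ : ℂ) * v g)
    (hvK : ∀ (g k : GL (Fin 2) ℚ_[p]), inK p k → v (g * k) = v g)
    (hv1 : v 1 = 1) :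
    ∀ (r : ℕ), 1 ≤ r → ∀ (k : GL (Fin 2) ℚ_[p]),
      -- (a)
      ((∀ s : ℕ, s + 1 ≤ r → inI p s k → ¬ inI p (s + 1) k →
          v (k * gamma p ^ r) - α * v (k * gamma p ^ (r - 1)) =
            α ^ s * β ^ (r - s) - α ^ (s + 1) * β ^ (r - 1 - s)) ∧
        (inI p r k →
          v (k * gamma p ^ r) - α * v (k * gamma p ^ (r - 1)) = 0)) ∧
      -- (b)
      ((inI p r k →
          v (k * gamma p ^ r) - β * v (k * gamma p ^ (r - 1)) =
            α ^ r * (1 - β / α)) ∧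
        (inK p k → ¬ inI p r k →
          v (k * gamma p ^ r) - β * v (k * gamma p ^ (r - 1)) = 0)) := by
  have hv : IsNormalizedNewVector p μ μ' v := ⟨hvB, hvK, hv1⟩
  replace hα : α = alpha p μ := hα
  replace hβ : β = beta p μ' := hβ
  subst hα hβ
  intro r hr k
  obtain ⟨m, rfl⟩ := Nat.exists_eq_add_of_le' hr
  rw [Nat.add_sub_cancel]
  have hin (hk : inI p (m + 1) k) := hv.apply_mul_gamma_pow_of_inI hμ hμ' hk
  have hin' (hk : inI p (m + 1) k) := hv.apply_mul_gamma_pow_of_inI hμ hμ' (inI_of_succ hk)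
  refine ⟨⟨fun s hs hk hk' ↦ ?_, fun hk ↦ ?_⟩, fun hk ↦ ?_, fun hK hk ↦ ?_⟩
  · rw [hv.apply_mul_gamma_pow_of_not_inI_succ hμ hμ' hk hk' (by lia),
      hv.apply_mul_gamma_pow_of_not_inI_succ hμ hμ' hk hk' (by lia)]
    ring
  · rw [hin hk, hin' hk]
    ring
  · have hα₀ := alpha_ne_zero p μ
    rw [hin hk, hin' hk]
    field_simp
    ring
  · obtain ⟨s, hs, hk, hk'⟩ := exists_inI_not_inI_succ hK hk
    rw [hv.apply_mul_gamma_pow_of_not_inI_succ hμ hμ' hk hk' (by lia),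
      hv.apply_mul_gamma_pow_of_not_inI_succ hμ hμ' hk hk' (by lia),
      Nat.sub_add_comm (by lia)]
    ring
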